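/- arXiv:2512.10541 — 2 statements merged into one kernel-verified Lean document; each statement's English description precedes it below -/
import Mathlib

section
/- Let α, β ∈ ℝ with 0 ≤ β, β ≤ α and β ≤ 1−α, let n, u ∈ ℝ³ be unit vectors, and let r ∈ ℝ. Define S1 := ((√(α+β)+√(α−β))/2) • 1 + ((√(α+β)−√(α−β))/2) • σ_n and S2 := ((√(1−α−β)+√(1−α+β))/2) • 1 + ((√(1−α−β)−√(1−α+β))/2) • σ_n (the positive square roots of E1 and E2), and ρ := (1/2) • (1 + r • σ_u). Then S1 * ρ * S1 + S2 * ρ * S2 = (1/2) • (1 + (r·(n ⬝ u)) • σ_n + (r·h) • (σ_u − (n ⬝ u) • σ_n)), where h := √(α²−β²) + √((1−α)²−β²). This is the non-selective (outcome-forgotten) post-measurement state ρ_F. -/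
open Matrix

noncomputable def σx : Matrix (Fin 2) (Fin 2) ℂ := !![0, 1; 1, 0]
noncomputable def σy : Matrix (Fin 2) (Fin 2) ℂ := !![0, -Complex.I; Complex.I, 0]
noncomputable def σz : Matrix (Fin 2) (Fin 2) ℂ := !![1, 0; 0, -1]

/-- For `v = (v1, v2, v3) ∈ ℝ³`, `σ_v := v1 • σx + v2 • σy + v3 • σz`. -/
noncomputable def pauliVec (v : Fin 3 → ℝ) : Matrix (Fin 2) (Fin 2) ℂ :=
  v 0 • σx + v 1 • σy + v 2 • σz

/-- Euclidean inner product on ℝ³. -/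
def dot3 (v w : Fin 3 → ℝ) : ℝ := v 0 * w 0 + v 1 * w 1 + v 2 * w 2

/-!
Let the state be `(1 + r U) / 2`, and split `U = c N + V` into its component along the involution
`N` and a remainder `V` anticommuting with `N`. A Kraus operator `S = f(N)` with eigenvalues `p` and
`q` commutes with `1 + r c N`, hence multiplies it by `f(N)²`, and summing over the outcomes gives
back `1 + r c N` by completeness. Moving `f(N)` past `V` swaps its two eigenvalues, so
`S V S = p q V`: the transverse part is only damped, by the factor `∑ p q`.
-/

section Involution

variable {K A : Type*} [Field K] [Ring A] [Algebra K A]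

/-- The functional calculus of an involution `N`: the element `f(N)` where `f 1 = p` and
`f (-1) = q` (meaningful when `2 ≠ 0` in `K`). It serves to express both the Kraus operators and the
part of the state commuting with them. -/
def involutionCalc (N : A) (p q : K) : A := ((p + q) / 2) • (1 : A) + ((p - q) / 2) • N

theorem sum_involutionCalc {ι : Type*} (s : Finset ι) (N : A) (p q : ι → K) :
    ∑ i ∈ s, involutionCalc N (p i) (q i) = involutionCalc N (∑ i ∈ s, p i) (∑ i ∈ s, q i) := by
  simp only [involutionCalc, Finset.sum_add_distrib, ← Finset.sum_smul, ← Finset.sum_div,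
    Finset.sum_sub_distrib]

theorem involutionCalc_mul_of_anticomm {N V : A} (hNV : N * V = -(V * N)) (p q : K) :
    involutionCalc N p q * V = V * involutionCalc N q p := by
  simp only [involutionCalc, add_mul, mul_add, smul_mul_assoc, mul_smul_comm, one_mul, mul_one, hNV]
  module

theorem mul_sub_smul_eq_neg {N U : A} {c : K} (hN : N * N = 1)
    (hNU : N * U + U * N = (2 * c) • (1 : A)) : N * (U - c • N) = -((U - c • N) * N) := by
  simp only [mul_sub, sub_mul, mul_smul_comm, smul_mul_assoc, hN, eq_sub_of_add_eq hNU]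
  module

variable [NeZero (2 : K)]

theorem involutionCalc_self (N : A) (p : K) : involutionCalc N p p = p • (1 : A) := by
  simp only [involutionCalc, add_self_div_two, sub_self, zero_div, zero_smul, add_zero]

theorem involutionCalc_one_add_one_sub (N : A) (c : K) :
    involutionCalc N (1 + c) (1 - c) = 1 + c • N := by
  have h2 : (2 : K) ≠ 0 := two_ne_zero
  rw [involutionCalc]
  match_scalars <;> field_simp <;> ring

theorem involutionCalc_mul {N : A} (hN : N * N = 1) (p q p' q' : K) :
    involutionCalc N p q * involutionCalc N p' q' = involutionCalc N (p * p') (q * q') := by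
  have h2 : (2 : K) ≠ 0 := two_ne_zero
  simp only [involutionCalc, add_mul, mul_add, smul_mul_assoc, mul_smul_comm, one_mul, mul_one, hN]
  match_scalars <;> field_simp <;> ring

theorem involutionCalc_mul_mul_of_anticomm {N V : A} (hN : N * N = 1) (hNV : N * V = -(V * N))
    (p q : K) : involutionCalc N p q * V * involutionCalc N p q = (p * q) • V := by
  rw [involutionCalc_mul_of_anticomm hNV, mul_assoc, involutionCalc_mul hN, mul_comm q p,
    involutionCalc_self, mul_smul_comm, mul_one]

theorem involutionCalc_mul_one_add_smul_mul {N U : A} {c : K} (hN : N * N = 1)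
    (hNU : N * U + U * N = (2 * c) • (1 : A)) (p q r : K) :
    involutionCalc N p q * (1 + r • U) * involutionCalc N p q =
      involutionCalc N (p ^ 2 * (1 + r * c)) (q ^ 2 * (1 - r * c)) +
        (r * (p * q)) • (U - c • N) := by
  have split_bloch : 1 + r • U =
      involutionCalc N (1 + r * c) (1 - r * c) + r • (U - c • N) := by
    rw [involutionCalc_one_add_one_sub]
    module
  rw [split_bloch, mul_add, add_mul, involutionCalc_mul hN, involutionCalc_mul hN,
    mul_smul_comm, smul_mul_assoc,
    involutionCalc_mul_mul_of_anticomm hN (mul_sub_smul_eq_neg hN hNU), smul_smul,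
    mul_right_comm p, mul_right_comm q, ← sq, ← sq]

theorem sum_involutionCalc_mul_one_add_smul_mul {ι : Type*} {s : Finset ι} {p q : ι → K}
    (hp : ∑ i ∈ s, p i ^ 2 = 1) (hq : ∑ i ∈ s, q i ^ 2 = 1) {N U : A} {c : K} (hN : N * N = 1)
    (hNU : N * U + U * N = (2 * c) • (1 : A)) (r : K) :
    ∑ i ∈ s, involutionCalc N (p i) (q i) * (1 + r • U) * involutionCalc N (p i) (q i) =
      1 + (r * c) • N + (r * ∑ i ∈ s, p i * q i) • (U - c • N) := by
  simp only [involutionCalc_mul_one_add_smul_mul hN hNU, Finset.sum_add_distrib,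
    sum_involutionCalc, ← Finset.sum_mul, hp, hq, one_mul, involutionCalc_one_add_one_sub,
    ← Finset.sum_smul, ← Finset.mul_sum]

end Involution

theorem pauliVec_eq_of (v : Fin 3 → ℝ) :
    pauliVec v = !![(v 2 : ℂ), v 0 - v 1 * Complex.I; v 0 + v 1 * Complex.I, -v 2] := by
  ext i j
  fin_cases i <;> fin_cases j <;> simp [pauliVec, σx, σy, σz, sub_eq_add_neg]

theorem pauliVec_mul_add_mul (v w : Fin 3 → ℝ) :
    pauliVec v * pauliVec w + pauliVec w * pauliVec v =
      (2 * dot3 v w) • (1 : Matrix (Fin 2) (Fin 2) ℂ) := by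
  rw [pauliVec_eq_of, pauliVec_eq_of, Matrix.mul_fin_two, Matrix.mul_fin_two, Matrix.one_fin_two]
  ext i j
  fin_cases i <;> fin_cases j <;>
    simp only [Fin.zero_eta, Fin.mk_one, Fin.isValue, Matrix.add_apply, Matrix.smul_apply,
      Matrix.of_apply, Matrix.cons_val', Matrix.cons_val_zero, Matrix.cons_val_one,
      Matrix.cons_val_fin_one, Complex.real_smul, dot3] <;>
    push_cast
  · linear_combination (-2 * (v 1 : ℂ) * w 1) * Complex.I_sq
  · ring
  · ring
  · linear_combination (-2 * (v 1 : ℂ) * w 1) * Complex.I_sq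

theorem pauliVec_mul_self (v : Fin 3 → ℝ) :
    pauliVec v * pauliVec v = dot3 v v • (1 : Matrix (Fin 2) (Fin 2) ℂ) := by
  have h := pauliVec_mul_add_mul v v
  rw [← two_smul ℝ, mul_smul] at h
  exact smul_right_injective _ (two_ne_zero' ℝ) h

theorem pauliVec_mul_self_of_unit {n : Fin 3 → ℝ} (hn : n 0 ^ 2 + n 1 ^ 2 + n 2 ^ 2 = 1) :
    pauliVec n * pauliVec n = 1 := by
  have dot_self : dot3 n n = 1 := by simpa only [dot3, ← sq] using hn
  rw [pauliVec_mul_self, dot_self, one_smul]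

theorem stmt_2_general {A : Type*} [Ring A] [Algebra ℝ A] {N U : A} {c α β : ℝ}
    (hN : N * N = 1) (hNU : N * U + U * N = (2 * c) • (1 : A)) (hα : |β| ≤ α)
    (hα' : |β| ≤ 1 - α) (r : ℝ) :
    involutionCalc N √(α + β) √(α - β) * ((1 / 2 : ℝ) • (1 + r • U)) *
          involutionCalc N √(α + β) √(α - β) +
        involutionCalc N √(1 - α - β) √(1 - α + β) * ((1 / 2 : ℝ) • (1 + r • U)) *
          involutionCalc N √(1 - α - β) √(1 - α + β) =
      (1 / 2 : ℝ) • (1 + (r * c) • N +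
        (r * (√(α ^ 2 - β ^ 2) + √((1 - α) ^ 2 - β ^ 2))) • (U - c • N)) := by
  obtain ⟨hneg, hpos⟩ := abs_le.mp hα
  obtain ⟨hneg', hpos'⟩ := abs_le.mp hα'
  have complete_pos : ∑ i, ![√(α + β), √(1 - α - β)] i ^ 2 = 1 := by
    simp [Fin.sum_univ_two, Real.sq_sqrt, show 0 ≤ α + β by linarith,
      show 0 ≤ 1 - α - β by linarith]
  have complete_neg : ∑ i, ![√(α - β), √(1 - α + β)] i ^ 2 = 1 := by
    simp [Fin.sum_univ_two, Real.sq_sqrt, show 0 ≤ α - β by linarith,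
      show 0 ≤ 1 - α + β by linarith]
  have damping : √(α + β) * √(α - β) = √(α ^ 2 - β ^ 2) := by
    rw [← Real.sqrt_mul (by linarith), sq_sub_sq]
  have damping' : √(1 - α - β) * √(1 - α + β) = √((1 - α) ^ 2 - β ^ 2) := by
    rw [← Real.sqrt_mul (by linarith), sq_sub_sq, mul_comm]
  have channel := sum_involutionCalc_mul_one_add_smul_mul complete_pos complete_neg hN hNU r
  simp only [Fin.sum_univ_two, Matrix.cons_val_zero, Matrix.cons_val_one, damping,
    damping'] at channel
  simp only [mul_smul_comm, smul_mul_assoc, ← smul_add, channel]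

theorem stmt_2 (α β r : ℝ) (hβ0 : 0 ≤ β) (hβα : β ≤ α) (hβα' : β ≤ 1 - α)
    (n u : Fin 3 → ℝ)
    (hn : n 0 ^ 2 + n 1 ^ 2 + n 2 ^ 2 = 1)
    (hu : u 0 ^ 2 + u 1 ^ 2 + u 2 ^ 2 = 1)
    (S1 S2 ρ : Matrix (Fin 2) (Fin 2) ℂ)
    (hS1 : S1 = ((Real.sqrt (α + β) + Real.sqrt (α - β)) / 2) • (1 : Matrix (Fin 2) (Fin 2) ℂ)
        + ((Real.sqrt (α + β) - Real.sqrt (α - β)) / 2) • pauliVec n)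
    (hS2 : S2 = ((Real.sqrt (1 - α - β) + Real.sqrt (1 - α + β)) / 2) • (1 : Matrix (Fin 2) (Fin 2) ℂ)
        + ((Real.sqrt (1 - α - β) - Real.sqrt (1 - α + β)) / 2) • pauliVec n)
    (hρ : ρ = (1 / 2 : ℝ) • ((1 : Matrix (Fin 2) (Fin 2) ℂ) + r • pauliVec u))
    (h : ℝ) (hh : h = Real.sqrt (α ^ 2 - β ^ 2) + Real.sqrt ((1 - α) ^ 2 - β ^ 2)) :
    S1 * ρ * S1 + S2 * ρ * S2
      = (1 / 2 : ℝ) • ((1 : Matrix (Fin 2) (Fin 2) ℂ)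
          + (r * dot3 n u) • pauliVec n
          + (r * h) • (pauliVec u - dot3 n u • pauliVec n)) := by
  subst hS1 hS2 hρ hh
  exact stmt_2_general (pauliVec_mul_self_of_unit hn) (pauliVec_mul_add_mul n u)
    (by rwa [abs_of_nonneg hβ0]) (by rwa [abs_of_nonneg hβ0]) r
end

section
/- (Case II of the paper, outcome E2.) Fix β, r ∈ ℝ and define f : ℝ → ℝ → Matrix (Fin 2) (Fin 2) ℂ by f x1 x2 := (1/2) • (1 + (r·√(1 − β²/(1−x1)²)) • (sin x2 • σx − cos x2 • σz) − (β/(1−x1)) • (cos x2 • σx + sin x2 • σz)) (the post-measurement state ρ_f2 for outcome E2 when the probe Bloch vector is orthogonal to the measurement direction n̂(θ) = (cos θ, 0, sin θ), with parameters α = x1 and θ = x2). Let (x1, x2) satisfy x1 < 1 and 0 < β < 1−x1, and let D1, D2 be the entrywise partial derivative matrices of f at (x1, x2). Then D1 * D2 = D2 * D1 if and only if r² = 1. -/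
open Matrix

/-- Entrywise partial derivative of a two-parameter family of matrices in the first
parameter, at `(x1, x2)`. -/
noncomputable def pderiv1 (f : ℝ → ℝ → Matrix (Fin 2) (Fin 2) ℂ) (x1 x2 : ℝ) :
    Matrix (Fin 2) (Fin 2) ℂ :=
  Matrix.of fun i j => deriv (fun t => f t x2 i j) x1

/-- Entrywise partial derivative of a two-parameter family of matrices in the second
parameter, at `(x1, x2)`. -/
noncomputable def pderiv2 (f : ℝ → ℝ → Matrix (Fin 2) (Fin 2) ℂ) (x1 x2 : ℝ) :
    Matrix (Fin 2) (Fin 2) ℂ :=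
  Matrix.of fun i j => deriv (fun t => f x1 t i j) x2

/-!
The Bloch vector of the state lies in the `xz`-plane. In the rotating orthonormal frame
`e = (sin θ, -cos θ)`, `n = (cos θ, sin θ)`, which satisfies `de/dθ = n` and `dn/dθ = -e`, it is
`a e - b n` with `a`, `b` depending only on the first parameter. Up to the factor `1 / 2`, the two
partial derivatives are therefore `a' e - b' n` and `a n + b e`, and their commutator is
`(a a' + b b') [σx, σz]`: they commute exactly when the squared Bloch length `a ^ 2 + b ^ 2` is
stationary in the first parameter. For `a = r √(1 - b ^ 2)` this squared length is
`r ^ 2 + (1 - r ^ 2) b ^ 2`, with derivative `2 (1 - r ^ 2) b b'`.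
-/

section Commutator

variable {R A : Type*} [CommRing R] [Ring A] [Algebra R A]

theorem commutator_smul_add_smul (a b c d : R) (x y : A) :
    (a • x + b • y) * (c • x + d • y) - (c • x + d • y) * (a • x + b • y) =
      (a * d - b * c) • (x * y - y * x) := by
  simp only [add_mul, mul_add, smul_mul_smul_comm]
  module

theorem commute_smul_add_smul_iff [IsDomain R] [Module.IsTorsionFree R A] {x y : A}
    (hxy : ¬Commute x y) (a b c d : R) :
    Commute (a • x + b • y) (c • x + d • y) ↔ a * d = b * c := by
  rw [commute_iff_eq, ← sub_eq_zero, commutator_smul_add_smul, smul_eq_zero_iff_left, sub_eq_zero]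
  exact sub_ne_zero.2 hxy

end Commutator

theorem hasDerivAt_matrix_apply {𝕜 E m n : Type*} [NontriviallyNormedField 𝕜]
    [NormedAddCommGroup E] [NormedSpace 𝕜 E] [Finite m] [Finite n] {f : 𝕜 → Matrix m n E}
    {D : Matrix m n E} {t : 𝕜} (hf : HasDerivAt f D t) (i : m) (j : n) :
    HasDerivAt (fun s => f s i j) (D i j) t := by
  cases nonempty_fintype m
  cases nonempty_fintype n
  exact hasDerivAt_pi.1 (hasDerivAt_pi.1 hf i) j

theorem pderiv1_eq_of_hasDerivAt {f : ℝ → ℝ → Matrix (Fin 2) (Fin 2) ℂ}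
    {D : Matrix (Fin 2) (Fin 2) ℂ} {x1 x2 : ℝ} (hf : HasDerivAt (fun t => f t x2) D x1) :
    pderiv1 f x1 x2 = D :=
  Matrix.ext fun i j => (hasDerivAt_matrix_apply hf i j).deriv

theorem pderiv2_eq_of_hasDerivAt {f : ℝ → ℝ → Matrix (Fin 2) (Fin 2) ℂ}
    {D : Matrix (Fin 2) (Fin 2) ℂ} {x1 x2 : ℝ} (hf : HasDerivAt (f x1) D x2) :
    pderiv2 f x1 x2 = D :=
  Matrix.ext fun i j => (hasDerivAt_matrix_apply hf i j).deriv

/-- The Pauli combination `n̂(θ) · σ` of the measurement direction `n̂(θ) = (cos θ, 0, sin θ)`. -/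
noncomputable def pauliAxis (θ : ℝ) : Matrix (Fin 2) (Fin 2) ℂ :=
  Real.cos θ • σx + Real.sin θ • σz

/-- The Pauli combination of the direction `(sin θ, 0, -cos θ)` orthogonal to `n̂(θ)` in the
`xz`-plane, with the orientation for which its derivative is `pauliAxis`. -/
noncomputable def pauliPerp (θ : ℝ) : Matrix (Fin 2) (Fin 2) ℂ :=
  Real.sin θ • σx - Real.cos θ • σz

/-- The qubit state whose Bloch vector has component `a` along `pauliPerp θ` and component `-b`
along `pauliAxis θ`. The minus sign is the one of the outcome `E2`. -/
noncomputable def planarState (a b θ : ℝ) : Matrix (Fin 2) (Fin 2) ℂ :=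
  (1 / 2 : ℝ) • (1 + a • pauliPerp θ - b • pauliAxis θ)

theorem not_commute_σx_σz : ¬Commute σx σz := by
  intro h
  have entry : (-1 : ℂ) = 1 := by simpa [σx, σz] using congrFun₂ h.eq 0 1
  norm_num at entry

theorem not_commute_pauliPerp_pauliAxis (θ : ℝ) : ¬Commute (pauliPerp θ) (pauliAxis θ) := by
  rw [pauliPerp, pauliAxis, sub_eq_add_neg, ← neg_smul,
    commute_smul_add_smul_iff not_commute_σx_σz]
  intro h
  linarith [Real.sin_sq_add_cos_sq θ]

section Calculus

open scoped Matrix.Norms.Elementwise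

theorem hasDerivAt_pauliPerp (θ : ℝ) : HasDerivAt pauliPerp (pauliAxis θ) θ := by
  refine (((Real.hasDerivAt_sin θ).smul_const σx).sub
    ((Real.hasDerivAt_cos θ).smul_const σz)).congr_deriv ?_
  rw [pauliAxis]
  module

theorem hasDerivAt_pauliAxis (θ : ℝ) : HasDerivAt pauliAxis (-pauliPerp θ) θ := by
  refine (((Real.hasDerivAt_cos θ).smul_const σx).add
    ((Real.hasDerivAt_sin θ).smul_const σz)).congr_deriv ?_
  rw [pauliPerp]
  module

theorem pderiv1_planarState {a b : ℝ → ℝ} {a' b' x : ℝ} (ha : HasDerivAt a a' x)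
    (hb : HasDerivAt b b' x) (θ : ℝ) :
    pderiv1 (fun t => planarState (a t) (b t)) x θ =
      (1 / 2 : ℝ) • (a' • pauliPerp θ + (-b') • pauliAxis θ) := by
  refine pderiv1_eq_of_hasDerivAt (HasDerivAt.const_smul (1 / 2 : ℝ) ?_)
  refine (((ha.smul_const _).const_add 1).sub (hb.smul_const _)).congr_deriv ?_
  module

theorem pderiv2_planarState (a b : ℝ → ℝ) (x θ : ℝ) :
    pderiv2 (fun t => planarState (a t) (b t)) x θ =
      (1 / 2 : ℝ) • (b x • pauliPerp θ + a x • pauliAxis θ) := by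
  refine pderiv2_eq_of_hasDerivAt (HasDerivAt.const_smul (1 / 2 : ℝ) ?_)
  refine ((((hasDerivAt_pauliPerp θ).const_smul (a x)).const_add 1).sub
    ((hasDerivAt_pauliAxis θ).const_smul (b x))).congr_deriv ?_
  module

end Calculus

theorem commute_pderiv_planarState_iff {a b : ℝ → ℝ} {a' b' x : ℝ} (ha : HasDerivAt a a' x)
    (hb : HasDerivAt b b' x) (θ : ℝ) :
    Commute (pderiv1 (fun t => planarState (a t) (b t)) x θ)
        (pderiv2 (fun t => planarState (a t) (b t)) x θ) ↔
      a x * a' + b x * b' = 0 := by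
  have half_ne_zero : (1 / 2 : ℝ) ≠ 0 := by norm_num
  rw [pderiv1_planarState ha hb, pderiv2_planarState, Commute.smul_left_iff₀ half_ne_zero,
    Commute.smul_right_iff₀ half_ne_zero,
    commute_smul_add_smul_iff (not_commute_pauliPerp_pauliAxis θ)]
  constructor <;> intro h <;> linarith

theorem sqrt_one_sub_sq_pos {b : ℝ} (hb : |b| < 1) : 0 < √(1 - b ^ 2) :=
  Real.sqrt_pos.2 (sub_pos.2 ((sq_lt_one_iff_abs_lt_one b).2 hb))

theorem hasDerivAt_sqrt_one_sub_sq {b : ℝ → ℝ} {b' x : ℝ} (hb : HasDerivAt b b' x)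
    (hbx : |b x| < 1) :
    HasDerivAt (fun t => √(1 - b t ^ 2)) (-(b x * b') / √(1 - b x ^ 2)) x := by
  have radicand_pos : 0 < 1 - b x ^ 2 := Real.sqrt_pos.1 (sqrt_one_sub_sq_pos hbx)
  refine (((hb.fun_pow 2).const_sub 1).sqrt radicand_pos.ne').congr_deriv ?_
  field_simp
  ring

theorem commute_pderiv_planarState_sqrt_iff {b : ℝ → ℝ} {b' x : ℝ} (hb : HasDerivAt b b' x)
    (hbx : |b x| < 1) (r θ : ℝ) :
    Commute (pderiv1 (fun t => planarState (r * √(1 - b t ^ 2)) (b t)) x θ)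
        (pderiv2 (fun t => planarState (r * √(1 - b t ^ 2)) (b t)) x θ) ↔
      (1 - r ^ 2) * (b x * b') = 0 := by
  have half_deriv_sq_blochLength :
      r * √(1 - b x ^ 2) * (r * (-(b x * b') / √(1 - b x ^ 2))) + b x * b' =
        (1 - r ^ 2) * (b x * b') := by
    have sqrt_ne_zero := (sqrt_one_sub_sq_pos hbx).ne'
    field_simp
    ring
  rw [commute_pderiv_planarState_iff ((hasDerivAt_sqrt_one_sub_sq hb hbx).const_mul r) hb,
    half_deriv_sq_blochLength]

theorem hasDerivAt_div_one_sub (β : ℝ) {x : ℝ} (hx : 1 - x ≠ 0) :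
    HasDerivAt (fun t => β / (1 - t)) (β / (1 - x) ^ 2) x := by
  refine ((hasDerivAt_const x β).div ((hasDerivAt_id x).const_sub 1) hx).congr_deriv ?_
  simp

theorem stmt_16_general {β x : ℝ} (hβ : β ≠ 0) (hβx : |β| < |1 - x|) (r θ : ℝ) :
    Commute
        (pderiv1 (fun t => planarState (r * √(1 - β ^ 2 / (1 - t) ^ 2)) (β / (1 - t))) x θ)
        (pderiv2 (fun t => planarState (r * √(1 - β ^ 2 / (1 - t) ^ 2)) (β / (1 - t))) x θ) ↔
      r ^ 2 = 1 := by
  have abs_one_sub_pos : 0 < |1 - x| := (abs_nonneg β).trans_lt hβx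
  have hx : 1 - x ≠ 0 := abs_pos.1 abs_one_sub_pos
  have abs_div_lt_one : |β / (1 - x)| < 1 := by rwa [abs_div, div_lt_one abs_one_sub_pos]
  have coeff_ne_zero : β / (1 - x) * (β / (1 - x) ^ 2) ≠ 0 := by positivity
  simp only [← div_pow]
  rw [commute_pderiv_planarState_sqrt_iff (hasDerivAt_div_one_sub β hx) abs_div_lt_one,
    mul_eq_zero_iff_right coeff_ne_zero, sub_eq_zero, eq_comm]

theorem stmt_16 (β r : ℝ)
    (f : ℝ → ℝ → Matrix (Fin 2) (Fin 2) ℂ)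
    (hf : f = fun x1 x2 => (1 / 2 : ℝ) • ((1 : Matrix (Fin 2) (Fin 2) ℂ)
        + (r * Real.sqrt (1 - β ^ 2 / (1 - x1) ^ 2)) •
            (Real.sin x2 • σx - Real.cos x2 • σz)
        - (β / (1 - x1)) • (Real.cos x2 • σx + Real.sin x2 • σz)))
    (x1 x2 : ℝ) (hx1 : x1 < 1) (hβ : 0 < β) (hβx : β < 1 - x1)
    (D1 D2 : Matrix (Fin 2) (Fin 2) ℂ)
    (hD1 : D1 = pderiv1 f x1 x2) (hD2 : D2 = pderiv2 f x1 x2) :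
    D1 * D2 = D2 * D1 ↔ r ^ 2 = 1 := by
  subst hf hD1 hD2
  exact stmt_16_general hβ.ne' (by rwa [abs_of_pos hβ, abs_of_pos (hβ.trans hβx)]) r x2
end
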